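/- Let the predictor be initialized as π₀ = π* where π* lies in the support of φ, and let γ ∈ Γ_WS. Then every π ∈ P(𝕏) reachable from π₀ under γ satisfies either (i) π ∈ B for some bin B ∈ ℬ^φ, or (ii) π lies on the boundary of some bin B ∈ ℬ^φ. -/

import Mathlib

/-! The support of the invariant measure `φ` is closed under every update of the predictor that
has positive probability, whatever quantizer is used: the update is continuous there, and the uniform
exploration policy uses each quantizer with positive probability
(`inSuppSimplex_nextPred`). Hence every state reachable from a support point under a stationary
policy is again in the support (`inSuppSimplex_of_reachable`). A support point lies in the closure of
some bin of positive measure, as there are only finitely many bins (`exists_bin_closure`); if it is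
not in that bin, it belongs to the rest of the simplex and so is on the boundary of the bin. -/

open Filter MeasureTheory Finset Set Topology

section FiniteCore

variable {X M Xhat : Type*}

/-- An encoder (quantization) policy: at time `t` it maps past channel symbols and the
source samples up to time `t` to a channel symbol. -/
def EncPolicy (X M : Type*) :=
  (t : ℕ) → (Fin t → M) → (Fin (t + 1) → X) → M

/-- A decoder policy: at time `t` it maps the channel symbols up to time `t` to a
reproduction symbol. -/
def DecPolicy (M Xhat : Type*) :=
  (t : ℕ) → (Fin (t + 1) → M) → Xhat

/-- The channel symbols produced by an encoder policy along a source path. -/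
def qSeq (γ : EncPolicy X M) (x : ℕ → X) : ℕ → M
  | t => γ t (fun i => qSeq γ x i.val) (fun i => x i.val)
termination_by t => t
decreasing_by exact i.isLt

/-- Extension of a finite source path to an infinite one (by an arbitrary constant). -/
noncomputable def extPath [Nonempty X] (t : ℕ) (x : Fin (t + 1) → X) : ℕ → X :=
  fun s => if h : s < t + 1 then x ⟨s, h⟩ else Classical.arbitrary X

/-- Probability of a finite source path under initial distribution `π₀` and
transition matrix `K`. -/
def pathProb [Fintype X] (K : X → X → ℝ) (π₀ : X → ℝ) (t : ℕ) (x : Fin (t + 1) → X) : ℝ :=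
  π₀ (x 0) * ∏ i : Fin t, K (x i.castSucc) (x i.succ)

/-- Expected distortion `E[d(X_t, X̂_t)]` at time `t`. -/
noncomputable def expDist [Fintype X] [Nonempty X] (K : X → X → ℝ) (π₀ : X → ℝ)
    (d : X → Xhat → ℝ) (γ : EncPolicy X M) (δ : DecPolicy M Xhat) (t : ℕ) : ℝ :=
  ∑ x : Fin (t + 1) → X, pathProb K π₀ t x *
    d (x (Fin.last t)) (δ t (fun i => qSeq γ (extPath t x) i.val))

/-- Long-run average distortion of an encoder/decoder pair. -/
noncomputable def avgCost [Fintype X] [Nonempty X] (K : X → X → ℝ) (π₀ : X → ℝ)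
    (d : X → Xhat → ℝ) (γ : EncPolicy X M) (δ : DecPolicy M Xhat) : ℝ :=
  Filter.limsup (fun T : ℕ => (∑ t ∈ Finset.range T, expDist K π₀ d γ δ t) / (T : ℝ))
    Filter.atTop

/-- Discounted distortion of an encoder/decoder pair. -/
noncomputable def discCost [Fintype X] [Nonempty X] (β : ℝ) (K : X → X → ℝ) (π₀ : X → ℝ)
    (d : X → Xhat → ℝ) (γ : EncPolicy X M) (δ : DecPolicy M Xhat) : ℝ :=
  ∑' t : ℕ, β ^ t * expDist K π₀ d γ δ t

/-- Average distortion of an encoder policy, under optimal decoding. -/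
noncomputable def avgJ [Fintype X] [Nonempty X] (K : X → X → ℝ) (π₀ : X → ℝ)
    (d : X → Xhat → ℝ) (γ : EncPolicy X M) : ℝ :=
  ⨅ δ : DecPolicy M Xhat, avgCost K π₀ d γ δ

/-- Optimal average distortion over all encoder policies. -/
noncomputable def avgJstar (M : Type*) [Fintype X] [Nonempty X] (K : X → X → ℝ) (π₀ : X → ℝ)
    (d : X → Xhat → ℝ) : ℝ :=
  ⨅ γ : EncPolicy X M, avgJ K π₀ d γ

/-- Discounted distortion of an encoder policy, under optimal decoding. -/
noncomputable def discJ [Fintype X] [Nonempty X] (β : ℝ) (K : X → X → ℝ) (π₀ : X → ℝ)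
    (d : X → Xhat → ℝ) (γ : EncPolicy X M) : ℝ :=
  ⨅ δ : DecPolicy M Xhat, discCost β K π₀ d γ δ

/-- Optimal discounted distortion over all encoder policies. -/
noncomputable def discJstar (M : Type*) [Fintype X] [Nonempty X] (β : ℝ) (K : X → X → ℝ)
    (π₀ : X → ℝ) (d : X → Xhat → ℝ) : ℝ :=
  ⨅ γ : EncPolicy X M, discJ β K π₀ d γ

/-- `t`-step transition probabilities of the source. -/
def Kpow [Fintype X] [DecidableEq X] (K : X → X → ℝ) : ℕ → X → X → ℝ
  | 0 => fun x y => if x = y then 1 else 0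
  | t + 1 => fun x y => ∑ z, K x z * Kpow K t z y

/-- `K` is a stochastic (Markov transition) matrix. -/
def IsMarkovMatrix [Fintype X] (K : X → X → ℝ) : Prop :=
  ∀ x, (∀ y, 0 ≤ K x y) ∧ ∑ y, K x y = 1

/-- Primitivity of a transition matrix; for finite chains this is equivalent to
irreducibility together with aperiodicity. -/
def IsPrimitiveMat [Fintype X] [DecidableEq X] (K : X → X → ℝ) : Prop :=
  ∃ t : ℕ, ∀ x y, 0 < Kpow K t x y

/-- `ζ` is an invariant distribution of the source. -/
def IsInvariantDist [Fintype X] (K : X → X → ℝ) (ζ : X → ℝ) : Prop :=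
  ζ ∈ stdSimplex ℝ X ∧ ∀ y, ∑ x, ζ x * K x y = ζ y

/-- Predictor update `π_{t+1}` from `π_t`, the quantizer `Q_t` and symbol `q_t`
(Bayesian update followed by one-step prediction). -/
noncomputable def nextPred [Fintype X] [DecidableEq M] (K : X → X → ℝ) (π : X → ℝ)
    (Q : X → M) (q : M) : X → ℝ :=
  fun x' => (∑ x ∈ Finset.univ.filter (fun x => Q x = q), K x x' * π x) /
    (∑ x ∈ Finset.univ.filter (fun x => Q x = q), π x)

/-- The predictor as a function of the past channel symbols, under the stationary
Walrand–Varaiya policy `γws` with initial distribution `π₀`. -/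
noncomputable def predOfHist [Fintype X] [DecidableEq M] (K : X → X → ℝ)
    (γws : (X → ℝ) → X → M) (π₀ : X → ℝ) : (t : ℕ) → (Fin t → M) → X → ℝ
  | 0, _ => π₀
  | t + 1, qs =>
      nextPred K (predOfHist K γws π₀ t fun i => qs i.castSucc)
        (γws (predOfHist K γws π₀ t fun i => qs i.castSucc)) (qs (Fin.last t))

/-- The encoder policy induced by a stationary Walrand–Varaiya policy `γws`. -/
noncomputable def wsEncoder [Fintype X] [DecidableEq M] (K : X → X → ℝ)
    (γws : (X → ℝ) → X → M) (π₀ : X → ℝ) : EncPolicy X M :=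
  fun t qs xs => γws (predOfHist K γws π₀ t qs) (xs (Fin.last t))

/-- The per-stage cost `c(π,Q)` (expected distortion under optimal decoding). -/
noncomputable def costC [Fintype X] [Fintype M] [DecidableEq M] [Fintype Xhat] [Nonempty Xhat]
    (d : X → Xhat → ℝ) (π : X → ℝ) (Q : X → M) : ℝ :=
  ∑ q : M, Finset.univ.inf' Finset.univ_nonempty
    (fun xh : Xhat => ∑ x ∈ Finset.univ.filter (fun x => Q x = q), π x * d x xh)

/-- The uniform grid `P_n(𝕏)` in the probability simplex. -/
def Pgrid [Fintype X] (n : ℕ) : Set (X → ℝ) :=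
  {p | p ∈ stdSimplex ℝ X ∧ ∀ x, ∃ k : ℕ, p x = (k : ℝ) / n}

/-- Euclidean distance on distributions. -/
noncomputable def eudist [Fintype X] (p q : X → ℝ) : ℝ :=
  Real.sqrt (∑ x, (p x - q x) ^ 2)

/-- `nn` is a Euclidean nearest-neighbor map onto `P_n(𝕏)`. -/
def IsNN [Fintype X] (n : ℕ) (nn : (X → ℝ) → X → ℝ) : Prop :=
  ∀ π ∈ stdSimplex ℝ X, nn π ∈ Pgrid n ∧ ∀ p ∈ Pgrid n, eudist π (nn π) ≤ eudist π p

/-- Total variation distance (in its `ℓ¹` form) on a finite alphabet. -/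
def tvDist [Fintype X] (p q : X → ℝ) : ℝ := ∑ x, |p x - q x|

end FiniteCore

section KernelFun

/-- Transition operator (acting on bounded measurable functions) of the predictor process
under the uniform exploration policy. -/
noncomputable def Tker (M : Type*) {X : Type*} [Fintype X] [DecidableEq X]
    [Fintype M] [DecidableEq M] (K : X → X → ℝ) (g : (X → ℝ) → ℝ) : (X → ℝ) → ℝ :=
  fun π => (Fintype.card (X → M) : ℝ)⁻¹ * ∑ Q : X → M, ∑ q : M,
    (∑ x ∈ Finset.univ.filter (fun x => Q x = q), π x) * g (nextPred K π Q q)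

/-- `φ` is an invariant probability measure of the predictor process under the uniform
exploration policy, supported on the probability simplex. -/
def IsPredInvariant (M : Type*) {X : Type*} [Fintype X] [DecidableEq X]
    [Fintype M] [DecidableEq M] (K : X → X → ℝ) (φ : Measure (X → ℝ)) : Prop :=
  IsProbabilityMeasure φ ∧ φ (stdSimplex ℝ X)ᶜ = 0 ∧
    ∀ g : (X → ℝ) → ℝ, Measurable g → (∃ C, ∀ π, |g π| ≤ C) →
      ∫ π, Tker M K g π ∂φ = ∫ π, g π ∂φ

/-- `t`-step transition operator of the predictor process under the stationary
Walrand–Varaiya policy `γws`, acting on functions; `iterWS K γws t g π` is the expectation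
of `g(π_t)` when `π₀ = π`. -/
noncomputable def iterWS {X M : Type*} [Fintype X] [Fintype M] [DecidableEq M] (K : X → X → ℝ)
    (γws : (X → ℝ) → X → M) : ℕ → ((X → ℝ) → ℝ) → (X → ℝ) → ℝ
  | 0, g => g
  | t + 1, g => fun π => ∑ q : M, (∑ x ∈ Finset.univ.filter (fun x => γws π x = q), π x) *
      iterWS K γws t g (nextPred K π (γws π) q)

end KernelFun

/-! ### The support of `φ` is closed under the predictor update -/

/-- `p` is a probability vector in the topological support of `φ`. -/
def InSuppSimplex {X : Type*} [Fintype X] (φ : Measure (X → ℝ)) (p : X → ℝ) : Prop :=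
  p ∈ stdSimplex ℝ X ∧ ∀ V : Set (X → ℝ), IsOpen V → p ∈ V → 0 < φ V

lemma nextPred_mem_stdSimplex {X M : Type*} [Fintype X] [DecidableEq M]
    {K : X → X → ℝ} (hK : IsMarkovMatrix K) {p : X → ℝ} (hp : p ∈ stdSimplex ℝ X)
    (Q : X → M) (q : M)
    (hpos : 0 < ∑ x ∈ Finset.univ.filter (fun x => Q x = q), p x) :
    nextPred K p Q q ∈ stdSimplex ℝ X := by
  refine ⟨fun x' => div_nonneg (Finset.sum_nonneg fun x _ =>
    mul_nonneg ((hK x).1 x') (hp.1 x)) hpos.le, ?_⟩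
  simp only [nextPred]
  rw [← Finset.sum_div, Finset.sum_comm]
  simp only [← Finset.sum_mul, (hK _).2, one_mul]
  exact div_self hpos.ne'

lemma measurable_nextPred {X M : Type*} [Fintype X] [DecidableEq M]
    (K : X → X → ℝ) (Q : X → M) (q : M) :
    Measurable (fun p : X → ℝ => nextPred K p Q q) := by
  unfold nextPred
  fun_prop

lemma continuousAt_nextPred {X M : Type*} [Fintype X] [DecidableEq M]
    (K : X → X → ℝ) (Q : X → M) (q : M) {p : X → ℝ}
    (hpos : 0 < ∑ x ∈ Finset.univ.filter (fun x => Q x = q), p x) :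
    ContinuousAt (fun p : X → ℝ => nextPred K p Q q) p := by
  refine continuousAt_pi.2 fun x' => ?_
  unfold nextPred
  exact ContinuousAt.div (Continuous.continuousAt (by fun_prop))
    (Continuous.continuousAt (by fun_prop)) hpos.ne'

/-- One step of the predictor keeps the support: if an open neighbourhood `V` of the updated
predictor were `φ`-null, then by invariance the one-step probability of entering `V` would vanish
`φ`-almost everywhere; but it is positive on a neighbourhood of `p`, because the update is
continuous where the received symbol has positive probability. -/
lemma inSuppSimplex_nextPred {X M : Type*} [Fintype X] [Nonempty X] [DecidableEq X]
    [Fintype M] [Nonempty M] [DecidableEq M]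
    {K : X → X → ℝ} (hK : IsMarkovMatrix K) {φ : Measure (X → ℝ)} (hφ : IsPredInvariant M K φ)
    {p : X → ℝ} (hp : InSuppSimplex φ p) (Q : X → M) (q : M)
    (hpos : 0 < ∑ x ∈ Finset.univ.filter (fun x => Q x = q), p x) :
    InSuppSimplex φ (nextPred K p Q q) := by
  refine ⟨nextPred_mem_stdSimplex hK hp.1 Q q hpos, fun V hV hmem => ?_⟩
  obtain ⟨hprob, hsimp, hinv⟩ := hφ
  by_contra hzero
  have hV0 : φ V = 0 := by simpa using hzero
  set g : (X → ℝ) → ℝ := V.indicator fun _ => (1 : ℝ) with hg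
  have hg0 : ∀ z, 0 ≤ g z := fun z => Set.indicator_nonneg (fun _ _ => zero_le_one) z
  have hg1 : ∀ z, g z ≤ 1 := fun z => Set.indicator_le_self' (fun _ _ => zero_le_one) z
  have hgm : Measurable g := measurable_const.indicator hV.measurableSet
  have hint := hinv g hgm ⟨1, fun z => by rw [abs_of_nonneg (hg0 z)]; exact hg1 z⟩
  have hg_int : ∫ z, g z ∂φ = 0 := by
    rw [hg, integral_indicator_const _ hV.measurableSet]
    simp [Measure.real, hV0]
  have hae : ∀ᵐ z ∂φ, z ∈ stdSimplex ℝ X := by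
    rw [ae_iff]; exact hsimp
  have hTm : Measurable (Tker M K g) := by
    unfold Tker
    refine measurable_const.mul (Finset.measurable_sum _ fun Q _ => Finset.measurable_sum _
      fun q _ => Measurable.mul (by fun_prop) (hgm.comp (measurable_nextPred K Q q)))
  have hterm : ∀ z ∈ stdSimplex ℝ X, ∀ (Q : X → M) (q : M),
      0 ≤ (∑ x ∈ Finset.univ.filter (fun x => Q x = q), z x) * g (nextPred K z Q q) :=
    fun z hz Q q => mul_nonneg (Finset.sum_nonneg fun x _ => hz.1 x) (hg0 _)
  have hT0 : ∀ z ∈ stdSimplex ℝ X, 0 ≤ Tker M K g z := fun z hz =>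
    mul_nonneg (by positivity) (Finset.sum_nonneg fun Q _ => Finset.sum_nonneg fun q _ =>
      hterm z hz Q q)
  have hTb : ∀ z ∈ stdSimplex ℝ X, Tker M K g z ≤
      (Fintype.card (X → M) : ℝ)⁻¹ * ∑ _Q : X → M, ∑ _q : M, (1 : ℝ) := by
    intro z hz
    refine mul_le_mul_of_nonneg_left (Finset.sum_le_sum fun Q _ => Finset.sum_le_sum fun q _ => ?_)
      (by positivity)
    refine mul_le_one₀ ?_ (hg0 _) (hg1 _)
    rw [← hz.2]
    exact Finset.sum_le_sum_of_subset_of_nonneg (Finset.filter_subset _ _) fun x _ _ => hz.1 x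
  have hTint : Integrable (Tker M K g) φ := by
    refine Integrable.of_bound hTm.aestronglyMeasurable
      ((Fintype.card (X → M) : ℝ)⁻¹ * ∑ _Q : X → M, ∑ _q : M, (1 : ℝ)) ?_
    filter_upwards [hae] with z hz
    rw [Real.norm_of_nonneg (hT0 z hz)]
    exact hTb z hz
  have hTae : Tker M K g =ᵐ[φ] 0 := by
    rw [← integral_eq_zero_iff_of_nonneg_ae (hae.mono hT0) hTint, hint, hg_int]
  have hnhds : {z : X → ℝ | 0 < ∑ x ∈ Finset.univ.filter (fun x => Q x = q), z x ∧
      nextPred K z Q q ∈ V} ∈ 𝓝 p := by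
    refine Filter.inter_mem ?_ ((continuousAt_nextPred K Q q hpos).preimage_mem_nhds
      (hV.mem_nhds hmem))
    have hc : Continuous fun z : X → ℝ =>
      ∑ x ∈ Finset.univ.filter (fun x => Q x = q), z x := by fun_prop
    exact (isOpen_lt continuous_const hc).mem_nhds hpos
  obtain ⟨W, hWsub, hWo, hpW⟩ := mem_nhds_iff.1 hnhds
  refine (hp.2 W hWo hpW).ne' ?_
  have hnot : ∀ᵐ z ∂φ, z ∉ W := by
    filter_upwards [hae, hTae] with z hz hTz hzW
    obtain ⟨h1, h2⟩ := hWsub hzW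
    have hgz : g (nextPred K z Q q) = 1 := Set.indicator_of_mem h2 _
    have : 0 < Tker M K g z := by
      refine mul_pos (inv_pos.2 (Nat.cast_pos.2 Fintype.card_pos)) ?_
      refine Finset.sum_pos' (fun Q _ => Finset.sum_nonneg fun q _ => hterm z hz Q q)
        ⟨Q, Finset.mem_univ _, Finset.sum_pos' (fun q _ => hterm z hz Q q)
          ⟨q, Finset.mem_univ _, ?_⟩⟩
      rw [hgz, mul_one]
      exact h1
    exact this.ne' hTz
  simpa [ae_iff] using hnot

lemma inSuppSimplex_of_reachable {X M : Type*} [Fintype X] [Nonempty X] [DecidableEq X]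
    [Fintype M] [Nonempty M] [DecidableEq M]
    {K : X → X → ℝ} (hK : IsMarkovMatrix K) {φ : Measure (X → ℝ)} (hφ : IsPredInvariant M K φ)
    (γws : (X → ℝ) → X → M) (π : X → ℝ) (t : ℕ) (p : X → ℝ) (hp : InSuppSimplex φ p)
    (h : 0 < iterWS K γws t (Set.indicator {π} fun _ => (1 : ℝ)) p) :
    InSuppSimplex φ π := by
  induction t generalizing p with
  | zero =>
    have : p ∈ ({π} : Set (X → ℝ)) := by
      by_contra hne
      simp only [iterWS, Set.indicator_of_notMem hne, lt_self_iff_false] at h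
    rwa [← Set.mem_singleton_iff.1 this]
  | succ t ih =>
    simp only [iterWS] at h
    obtain ⟨q, -, hq⟩ := Finset.exists_lt_of_sum_lt (s := Finset.univ) (f := fun _ : M => (0 : ℝ))
      (Finset.sum_const_zero.trans_lt h)
    have hs : 0 ≤ ∑ x ∈ Finset.univ.filter (fun x => γws p x = q), p x :=
      Finset.sum_nonneg fun x _ => hp.1.1 x
    have hspos := hs.lt_of_ne fun h0 => by
      simp [← h0] at hq
    exact ih _ (inSuppSimplex_nextPred hK hφ hp _ q hspos) (pos_of_mul_pos_right hq hs)

/-! ### Bins near a point of the support -/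

lemma finite_Pgrid {X : Type*} [Fintype X] {n : ℕ} (hn : 1 ≤ n) :
    (Pgrid n : Set (X → ℝ)).Finite := by
  refine (Set.Finite.pi' (t := fun _ : X => (fun k : ℕ => (k : ℝ) / n) '' Set.Iic n)
    fun _ => (Set.finite_Iic n).image _).subset fun p hp x => ?_
  obtain ⟨k, hk⟩ := hp.2 x
  refine ⟨k, ?_, hk.symm⟩
  have h1 : p x ≤ 1 := by
    rw [← hp.1.2]
    exact Finset.single_le_sum (fun y _ => hp.1.1 y) (Finset.mem_univ x)
  have hn' : (0 : ℝ) < n := by exact_mod_cast hn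
  rw [hk, div_le_one hn'] at h1
  exact_mod_cast h1

/-- A support point is adherent to some bin of positive measure: otherwise the complement of the
finitely many closures of such bins is an open neighbourhood covered by null bins and the null
complement of the simplex. The bins need not be measurable, since only subadditivity is used. -/
lemma exists_bin_closure {X : Type*} [Fintype X] {φ : Measure (X → ℝ)}
    (hsimp : φ (stdSimplex ℝ X)ᶜ = 0) {n : ℕ} (hn : 1 ≤ n)
    {nn : (X → ℝ) → X → ℝ} (hnn : IsNN n nn) {p : X → ℝ} (hp : InSuppSimplex φ p) :
    ∃ πhat ∈ Pgrid n, 0 < φ {π' | π' ∈ stdSimplex ℝ X ∧ nn π' = πhat} ∧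
      p ∈ closure {π' | π' ∈ stdSimplex ℝ X ∧ nn π' = πhat} := by
  by_contra! hcon
  set bin : (X → ℝ) → Set (X → ℝ) := fun c => {π' | π' ∈ stdSimplex ℝ X ∧ nn π' = c} with hbin
  have hfin : ({c ∈ Pgrid n | 0 < φ (bin c)} : Set (X → ℝ)).Finite :=
    (finite_Pgrid hn).subset fun c hc => hc.1
  have hclosed : IsClosed (⋃ c ∈ {c ∈ Pgrid n | 0 < φ (bin c)}, closure (bin c)) :=
    hfin.isClosed_biUnion fun c _ => isClosed_closure
  refine (hp.2 _ hclosed.isOpen_compl ?_).ne' ?_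
  · simp only [Set.mem_compl_iff, Set.mem_iUnion, not_exists]
    exact fun c hc => hcon c hc.1 hc.2
  · have hnull : φ (⋃ c ∈ {c ∈ Pgrid n | φ (bin c) = 0}, bin c) = 0 :=
      (measure_biUnion_null_iff
        ((finite_Pgrid hn).subset fun c hc => hc.1).countable).2 fun c hc => hc.2
    refine measure_mono_null ?_ (measure_union_null hsimp hnull)
    intro z hz
    by_cases hzs : z ∈ stdSimplex ℝ X
    · refine Or.inr (Set.mem_biUnion (x := nn z) ⟨(hnn z hzs).1, ?_⟩ ⟨hzs, rfl⟩)
      by_contra hne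
      exact hz (Set.mem_biUnion (x := nn z) ⟨(hnn z hzs).1, pos_iff_ne_zero.2 hne⟩
        (subset_closure ⟨hzs, rfl⟩))
    · exact Or.inl hzs

/-- Let the predictor be initialized at `π₀ = πstar` lying in the support
of `φ` (the unique invariant measure of the predictor process under the uniform policy),
and let `γws` be a stationary Walrand–Varaiya policy. Then every `π ∈ P(𝕏)` reachable from
`πstar` under `γws` either (i) lies in a quantization bin of positive `φ`-measure, or
(ii) lies on the (relative) boundary of such a bin. -/
theorem stmt13 {X M : Type*}
    [Fintype X] [Nonempty X] [DecidableEq X]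
    [Fintype M] [Nonempty M] [DecidableEq M]
    (K : X → X → ℝ) (hK : IsMarkovMatrix K) (hprim : IsPrimitiveMat K)
    (φ : Measure (X → ℝ)) (hφ : IsPredInvariant M K φ)
    (n : ℕ) (hn : 1 ≤ n) (nn : (X → ℝ) → X → ℝ) (hnn : IsNN n nn)
    (πstar : X → ℝ) (hπstar : πstar ∈ stdSimplex ℝ X)
    (hsupp : ∀ V : Set (X → ℝ), IsOpen V → πstar ∈ V → 0 < φ V)
    (γws : (X → ℝ) → X → M)
    (π : X → ℝ)
    (hreach : ∃ t : ℕ,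
      0 < iterWS K γws t (Set.indicator {π} fun _ => (1 : ℝ)) πstar) :
    (∃ πhat ∈ Pgrid n, 0 < φ {π' | π' ∈ stdSimplex ℝ X ∧ nn π' = πhat} ∧
        π ∈ {π' | π' ∈ stdSimplex ℝ X ∧ nn π' = πhat}) ∨
    (∃ πhat ∈ Pgrid n, 0 < φ {π' | π' ∈ stdSimplex ℝ X ∧ nn π' = πhat} ∧
        π ∈ closure {π' | π' ∈ stdSimplex ℝ X ∧ nn π' = πhat} ∧
        π ∈ closure (stdSimplex ℝ X \ {π' | π' ∈ stdSimplex ℝ X ∧ nn π' = πhat})) := by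
  obtain ⟨t, ht⟩ := hreach
  have hπ := inSuppSimplex_of_reachable hK hφ γws π t πstar ⟨hπstar, hsupp⟩ ht
  obtain ⟨c, hc, hcpos, hcl⟩ := exists_bin_closure hφ.2.1 hn hnn hπ
  by_cases hmem : π ∈ {π' | π' ∈ stdSimplex ℝ X ∧ nn π' = c}
  · exact Or.inl ⟨c, hc, hcpos, hmem⟩
  · exact Or.inr ⟨c, hc, hcpos, hcl, subset_closure ⟨hπ.1, hmem⟩⟩
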